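/- Let M = (T_P, T_F, Q, q_I, δ, ℓ) be a CFM over names with no input names (N_I = ∅), and let ⟨·⟩ be an assignment. Define by recursion on t ∈ ℕ: the environment e_0(s) = ⟨init_s⟩ for every output name s; P_t = {τ_p ∈ T_P | τ_p evaluates to true in the environment interpreting each output name s' by e_t(s') and each function/predicate name by ⟨·⟩}; q_0 = q_I and q_{t+1} = δ(P_t, q_t); and e_{t+1}(s) = the value of the function term ℓ(P_t, q_t, s) evaluated in the environment interpreting each output name s' by e_t(s') and each function name by ⟨·⟩. Then, for the unique run r of M compatible with ⟨·⟩ and for every t ∈ ℕ and every output name s, one has e_t(s) = ⟨η(ς_r, t, s)⟩. That is, the step-by-step (functional-reactive, Mealy-style) execution of the CFM computes exactly the semantics of the CFM defined via η-evaluation along its compatible run. -/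

import Mathlib

set_option autoImplicit false

namespace TSLspec

/-- Function terms over input-signal names `I`, output-signal names `O` and
function names `F` with arities `arF`.  The constructor `init s` is the fresh
`0`-ary constant term `init_s` providing the initial value of the output
signal `s`. -/
inductive FTerm (I O F : Type) (arF : F → ℕ) : Type where
  | inp  : I → FTerm I O F arF
  | out  : O → FTerm I O F arF
  | init : O → FTerm I O F arF
  | app  : (f : F) → (Fin (arF f) → FTerm I O F arF) → FTerm I O F arF

variable {I O F P : Type} {arF : F → ℕ} {arP : P → ℕ}

/-- Predicate terms `p(τ₀, …, τ_{n-1})`. -/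
structure PTerm (I O F P : Type) (arF : F → ℕ) (arP : P → ℕ) : Type where
  pred : P
  args : Fin (arP pred) → FTerm I O F arF

/-- A computation step is a map from output names to function terms; a
computation is an infinite sequence of computation steps. -/
abbrev Computation (I O F : Type) (arF : F → ℕ) : Type :=
  ℕ → O → FTerm I O F arF

/-- Substitute each output name `s` by `c s`. -/
def substOut (c : O → FTerm I O F arF) : FTerm I O F arF → FTerm I O F arF
  | .inp i => .inp i
  | .out s => c s
  | .init s => .init s
  | .app f a => .app f (fun k => substOut c (a k))

/-- Substitute each output name `s` by the constant `init_s`. -/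
def substInit : FTerm I O F arF → FTerm I O F arF
  | .inp i => .inp i
  | .out s => .init s
  | .init s => .init s
  | .app f a => .app f (fun k => substInit (a k))

/-- The evaluation function `η`: `η(ς,t,s) = s` for input names `s`;
`η(ς,0,s) = init_s` for output names `s`; `η(ς,t,s) = η(ς,t-1,ς(t-1)(s))` for
output names `s` and `t > 0`; and `η` commutes with applications. -/
def eta (ς : Computation I O F arF) : ℕ → FTerm I O F arF → FTerm I O F arF
  | 0, τ => substInit τ
  | t + 1, τ => eta ς t (substOut (ς t) τ)

/-- `η` applied to a predicate term (argumentwise). -/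
def etaP (ς : Computation I O F arF) (t : ℕ)
    (pt : PTerm I O F P arF arP) : PTerm I O F P arF arP :=
  ⟨pt.pred, fun k => eta ς t (pt.args k)⟩

/-- An assignment `⟨·⟩`: values for input names, an `n`-ary function on
values for each `n`-ary function name, an `n`-ary Boolean predicate on values
for each `n`-ary predicate name, and an initial value `⟨init_s⟩` for each
output name `s`. -/
structure Assignment (V I O F P : Type) (arF : F → ℕ) (arP : P → ℕ) :
    Type where
  inpVal  : I → V
  fnVal   : (f : F) → (Fin (arF f) → V) → V
  prVal   : (p : P) → (Fin (arP p) → V) → Bool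
  initVal : O → V

variable {V : Type}

/-- Evaluation of a function term under an assignment, in an environment
`env` interpreting the output names.  For terms containing no output names
the result is independent of `env`. -/
def evalF (A : Assignment V I O F P arF arP) (env : O → V) :
    FTerm I O F arF → V
  | .inp i => A.inpVal i
  | .out s => env s
  | .init s => A.initVal s
  | .app f a => A.fnVal f (fun k => evalF A env (a k))

/-- Evaluation of a predicate term. -/
def evalP (A : Assignment V I O F P arF arP) (env : O → V)
    (pt : PTerm I O F P arF arP) : Bool :=
  A.prVal pt.pred (fun k => evalF A env (pt.args k))

/-- TSL formulas. -/
inductive Formula (I O F P : Type) (arF : F → ℕ) (arP : P → ℕ) : Type where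
  | predT  : PTerm I O F P arF arP → Formula I O F P arF arP
  | updT   : O → FTerm I O F arF → Formula I O F P arF arP
  | notT   : Formula I O F P arF arP → Formula I O F P arF arP
  | andT   : Formula I O F P arF arP → Formula I O F P arF arP →
             Formula I O F P arF arP
  | nextT  : Formula I O F P arF arP → Formula I O F P arF arP
  | untilT : Formula I O F P arF arP → Formula I O F P arF arP →
             Formula I O F P arF arP

/-- TSL satisfaction `ς,t ⊨ φ` (under the assignment `A`).  A predicate term
is satisfied iff its `η`-unfolding evaluates to `true` (the unfolding
contains no output names, so the value is independent of the environment and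
we quantify over all environments); an update term `[s ↜ τ]` is satisfied
iff `ς(t)(s) = τ` syntactically. -/
def Sat (A : Assignment V I O F P arF arP) (ς : Computation I O F arF) :
    Formula I O F P arF arP → ℕ → Prop
  | .predT pt, t => ∀ env : O → V, evalP A env (etaP ς t pt) = true
  | .updT s τ, t => ς t s = τ
  | .notT ψ, t => ¬ Sat A ς ψ t
  | .andT ψ θ, t => Sat A ς ψ t ∧ Sat A ς θ t
  | .nextT ψ, t => Sat A ς ψ (t + 1)
  | .untilT θ ψ, t =>
      ∃ u, t ≤ u ∧ Sat A ς ψ u ∧ ∀ t', t ≤ t' → t' < u → Sat A ς θ t'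

/-- A TSL formula is realizable iff some computation satisfies it under every
assignment (over every set of values). -/
def Realizable (φ : Formula I O F P arF arP) : Prop :=
  ∃ ς : Computation I O F arF,
    ∀ (V : Type) (A : Assignment V I O F P arF arP), Sat A ς φ 0

/- Derived TSL operators. -/

/-- A tautology (built from the formula `θ`). -/
def tslTrue (θ : Formula I O F P arF arP) : Formula I O F P arF arP :=
  .notT (.andT θ (.notT θ))

def tslFalse (θ : Formula I O F P arF arP) : Formula I O F P arF arP :=
  .notT (tslTrue θ)

def tslOr (a b : Formula I O F P arF arP) : Formula I O F P arF arP :=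
  .notT (.andT (.notT a) (.notT b))

def tslImp (a b : Formula I O F P arF arP) : Formula I O F P arF arP :=
  .notT (.andT a (.notT b))

def tslIff (a b : Formula I O F P arF arP) : Formula I O F P arF arP :=
  .andT (tslImp a b) (tslImp b a)

/-- Finally: `F θ = true 𝒰 θ`. -/
def tslF (base θ : Formula I O F P arF arP) : Formula I O F P arF arP :=
  .untilT (tslTrue base) θ

/-- Always: `G θ = ¬ F ¬ θ`. -/
def tslG (base θ : Formula I O F P arF arP) : Formula I O F P arF arP :=
  .notT (tslF base (.notT θ))

def bigAndT (base : Formula I O F P arF arP)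
    (l : List (Formula I O F P arF arP)) : Formula I O F P arF arP :=
  l.foldr .andT (tslTrue base)

def bigOrT (base : Formula I O F P arF arP)
    (l : List (Formula I O F P arF arP)) : Formula I O F P arF arP :=
  l.foldr tslOr (tslFalse base)

end TSLspec
namespace TSLspec

variable {I O F P : Type} {arF : F → ℕ} {arP : P → ℕ} {V : Type}

/-- A Control Flow Model (CFM): finite sets `TP` of predicate terms and `TF`
of function terms, a finite set `Q` of configurations with initial
configuration `qI`, a configuration update `trans` and a program update
`label`. -/
structure CFM (I O F P : Type) (arF : F → ℕ) (arP : P → ℕ) : Type 1 where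
  TP : Finset (PTerm I O F P arF arP)
  TF : Finset (FTerm I O F arF)
  Q : Type
  finQ : Finite Q
  qI : Q
  trans : Set (PTerm I O F P arF arP) → Q → Q
  label : Set (PTerm I O F P arF arP) → Q → O → FTerm I O F arF

/-- An infinite sequence of computation steps and configurations. -/
abbrev CFM.RunSeq (M : CFM I O F P arF arP) : Type :=
  ℕ → (O → FTerm I O F arF) × M.Q

/-- The computation induced by a run. -/
def CFM.RunSeq.comp {M : CFM I O F P arF arP} (r : M.RunSeq) :
    Computation I O F arF := fun t => (r t).1

/-- A run starts in the initial configuration. -/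
def CFM.IsRun (M : CFM I O F P arF arP) (r : M.RunSeq) : Prop :=
  (r 0).2 = M.qI

/-- `P_t`: the set of predicate terms of `M.TP` whose `η`-unfolding along `ς`
at time `t` evaluates to `true` under the assignment `A`. -/
def truePreds (M : CFM I O F P arF arP) (A : Assignment V I O F P arF arP)
    (ς : Computation I O F arF) (t : ℕ) :
    Set (PTerm I O F P arF arP) :=
  {pt | pt ∈ M.TP ∧ ∀ env : O → V, evalP A env (etaP ς t pt) = true}

/-- Compatibility of a run with an assignment. -/
def Compatible (M : CFM I O F P arF arP) (A : Assignment V I O F P arF arP)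
    (r : M.RunSeq) : Prop :=
  ∀ t : ℕ,
    (∀ s : O, (r t).1 s = M.label (truePreds M A r.comp t) (r t).2 s) ∧
    (r (t + 1)).2 = M.trans (truePreds M A r.comp t) (r t).2

end TSLspec
namespace TSLspec

/-- The step-by-step (functional-reactive, Mealy-style) execution of a CFM
under an assignment, for a setting with no input names: at each time `t` it
records the current values `e_t : O → V` of the output signals together with
the current configuration `q_t`.  Initially `e_0(s) = ⟨init_s⟩` and
`q_0 = q_I`; at each step the set `P_t` of predicate terms of `TP` that
evaluate to `true` in the environment `e_t` is computed, the next values are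
obtained by evaluating the terms `ℓ(P_t, q_t, s)` in the environment `e_t`,
and the configuration is updated to `δ(P_t, q_t)`. -/
def exec {I O F P : Type} {arF : F → ℕ} {arP : P → ℕ} {V : Type}
    (M : CFM I O F P arF arP) (A : Assignment V I O F P arF arP) :
    ℕ → (O → V) × M.Q
  | 0 => (fun s => A.initVal s, M.qI)
  | t + 1 =>
      let e := (exec M A t).1
      let q := (exec M A t).2
      let Pt : Set (PTerm I O F P arF arP) :=
        {pt | pt ∈ M.TP ∧ evalP A e pt = true}
      (fun s => evalF A e (M.label Pt q s), M.trans Pt q)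

section

variable {I O F P : Type} {arF : F → ℕ} {arP : P → ℕ} {V : Type}

theorem evalF_substOut (A : Assignment V I O F P arF arP) (env : O → V)
    (c : O → FTerm I O F arF) (τ : FTerm I O F arF) :
    evalF A env (substOut c τ) = evalF A (fun s => evalF A env (c s)) τ := by
  induction τ with
  | inp i => rfl
  | out s => rfl
  | init s => rfl
  | app f a ih => simp only [substOut, evalF, ih]

theorem evalF_substInit (A : Assignment V I O F P arF arP) (env : O → V)
    (τ : FTerm I O F arF) :
    evalF A env (substInit τ) = evalF A A.initVal τ := by
  induction τ with
  | inp i => rfl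
  | out s => rfl
  | init s => rfl
  | app f a ih => simp only [substInit, evalF, ih]

/-- The output values along a fixed computation `ς`: start from the initial values and at each step
evaluate the terms `ς t s` in the current environment. Whereas `eta` unfolds a term backwards from
time `t` by substitution, `outEnv` computes forwards on values; it mediates between `eta` and
`exec`. -/
def outEnv (A : Assignment V I O F P arF arP) (ς : Computation I O F arF) : ℕ → O → V
  | 0 => A.initVal
  | t + 1 => fun s => evalF A (outEnv A ς t) (ς t s)

theorem evalF_eta (A : Assignment V I O F P arF arP) (ς : Computation I O F arF)
    (env : O → V) (t : ℕ) (τ : FTerm I O F arF) :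
    evalF A env (eta ς t τ) = evalF A (outEnv A ς t) τ := by
  induction t generalizing τ with
  | zero => exact evalF_substInit A env τ
  | succ t ih =>
    calc evalF A env (eta ς (t + 1) τ)
        = evalF A (outEnv A ς t) (substOut (ς t) τ) := ih (substOut (ς t) τ)
      _ = evalF A (outEnv A ς (t + 1)) τ := evalF_substOut A (outEnv A ς t) (ς t) τ

theorem evalP_etaP (A : Assignment V I O F P arF arP) (ς : Computation I O F arF)
    (env : O → V) (t : ℕ) (pt : PTerm I O F P arF arP) :
    evalP A env (etaP ς t pt) = evalP A (outEnv A ς t) pt := by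
  simp only [evalP, etaP, evalF_eta]

theorem truePreds_eq_setOf_evalP_outEnv (M : CFM I O F P arF arP)
    (A : Assignment V I O F P arF arP) (ς : Computation I O F arF) (t : ℕ) :
    truePreds M A ς t = {pt | pt ∈ M.TP ∧ evalP A (outEnv A ς t) pt = true} := by
  -- `outEnv A ς t` witnesses that the quantifier over environments is not vacuous.
  have : Nonempty (O → V) := ⟨outEnv A ς t⟩
  simp only [truePreds, evalP_etaP, forall_const]

theorem exec_eq_outEnv_of_compatible {M : CFM I O F P arF arP}
    {A : Assignment V I O F P arF arP} {r : M.RunSeq}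
    (hrun : M.IsRun r) (hcomp : Compatible M A r) (t : ℕ) :
    exec M A t = (outEnv A r.comp t, (r t).2) := by
  induction t with
  | zero => exact Prod.ext rfl hrun.symm
  | succ t ih =>
    obtain ⟨hstep, hconf⟩ := hcomp t
    have hlabel : ∀ s, r.comp t s = M.label (truePreds M A r.comp t) (r t).2 s := hstep
    simp only [exec, ih, outEnv, hlabel, hconf, truePreds_eq_setOf_evalP_outEnv]

theorem exec_eq_eta_semantics_general (M : CFM I O F P arF arP)
    (A : Assignment V I O F P arF arP) (r : M.RunSeq)
    (hrun : M.IsRun r) (hcomp : Compatible M A r)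
    (t : ℕ) (τ : FTerm I O F arF) (env : O → V) :
    evalF A (exec M A t).1 τ = evalF A env (eta r.comp t τ) := by
  rw [exec_eq_outEnv_of_compatible hrun hcomp, evalF_eta]

end

/-- Let `M` be a CFM over names without input names and let
`⟨·⟩` be an assignment.  Then for the (unique) run `r` of `M` compatible with
`⟨·⟩`, for every `t` and every output name `s`, the value `e_t(s)` computed
by the step-by-step execution equals `⟨η(ς_r, t, s)⟩` (the `η`-unfolding
contains no output names, so its value is independent of the environment,
over which we quantify). -/
theorem exec_eq_eta_semantics {I O F P : Type} {arF : F → ℕ} {arP : P → ℕ}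
    (hI : IsEmpty I) (M : CFM I O F P arF arP) (V : Type)
    (A : Assignment V I O F P arF arP) (r : M.RunSeq)
    (hrun : M.IsRun r) (hcomp : Compatible M A r) :
    ∀ (t : ℕ) (s : O) (env : O → V),
      (exec M A t).1 s = evalF A env (eta r.comp t (.out s)) := by
  intro t s env
  exact exec_eq_eta_semantics_general M A r hrun hcomp t (.out s) env

end TSLspec
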